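/- Let C = ⟨(b|0), (ℓ | fh+2f)⟩ be a Z_2Z_4-additive cyclic code with fhg = x^β-1, β odd, and dual code C⊥ = ⟨(b̄|0), (ℓ̄ | f̄h̄+2f̄)⟩ with f̄ḡh̄ = x^β-1. Then b̄ = (x^α - 1)/(gcd(b,ℓ))* in Z_2[x], where p* denotes the reciprocal polynomial. -/

import Mathlib

open Polynomial

/-- Reduction modulo 2, `Z₄[x] → Z₂[x]`. -/
noncomputable def red42 : Polynomial (ZMod 4) →+* Polynomial (ZMod 2) :=
  Polynomial.mapRingHom (ZMod.castHom (show 2 ∣ 4 by norm_num) (ZMod 2))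

/-- The polynomial `∑ uᵢ xⁱ` associated to a binary vector. -/
noncomputable def polyOf2 {α : ℕ} (u : Fin α → ZMod 2) : Polynomial (ZMod 2) :=
  ∑ i, C (u i) * X ^ (i : ℕ)

/-- The polynomial `∑ u'ⱼ xʲ` associated to a quaternary vector. -/
noncomputable def polyOf4 {β : ℕ} (u : Fin β → ZMod 4) : Polynomial (ZMod 4) :=
  ∑ j, C (u j) * X ^ (j : ℕ)

/-- Membership in the `Z₂Z₄`-additive cyclic code `C = ⟨(b|0), (ℓ|q)⟩`. -/
def memC {α β : ℕ} (b ℓ : Polynomial (ZMod 2)) (q : Polynomial (ZMod 4))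
    (z : (Fin α → ZMod 2) × (Fin β → ZMod 4)) : Prop :=
  ∃ lam mu : Polynomial (ZMod 4),
    (X ^ α - 1 : Polynomial (ZMod 2)) ∣
        polyOf2 z.1 - (red42 lam * b + red42 mu * ℓ) ∧
    (X ^ β - 1 : Polynomial (ZMod 4)) ∣ polyOf4 z.2 - mu * q

/-- The standard inner product on `Z₂^α × Z₄^β` with values in `Z₄`. -/
def innerZ2Z4 {α β : ℕ} (u v : (Fin α → ZMod 2) × (Fin β → ZMod 4)) : ZMod 4 :=
  2 * ∑ i, (((u.1 i).val : ZMod 4) * ((v.1 i).val : ZMod 4)) + ∑ j, u.2 j * v.2 j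

/-!
Identify `Rⁿ` with `R[x]/(x^n - 1)`. Multiplication by `x` permutes the standard basis, hence is an
isometry of the dot product, and the adjoint of multiplication by `d` is, up to a power of the unit
`x`, multiplication by the reciprocal `d*`. So `w` is orthogonal to the cyclic code generated by `d`
iff `x^n - 1 ∣ d* w`; if `d e = x^n - 1`, this says `e* ∣ w`.

A vector `(v | 0)` is orthogonal to `C = ⟨(b|0), (ℓ|q)⟩` iff `v` is orthogonal to the binary part of
`C`, which is the cyclic code generated by `d = gcd(b, ℓ)`. On the other hand `(v | 0) ∈ C⊥` iff
`b̄ ∣ v`, because for odd `β` the polynomial `x^β - 1` has no repeated factor modulo 2, so every `μ`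
annihilating `f̄h̄ + 2f̄` is divisible by `h̄ḡ` modulo 2. Hence `b̄ = e*`.
-/

open scoped Matrix

section CyclicCoeff

variable {R : Type*} [CommRing R]

/-- The coefficient vector of the class of `p` in `R[x]/(x^n - 1)`. It identifies this quotient with
`Rⁿ`, the inverse map being `u ↦ ∑ uᵢ xⁱ`, and transports the dot product to polynomials. -/
noncomputable def cyclicCoeff (n : ℕ) : R[X] →ₗ[R] Fin n → R :=
  LinearMap.pi fun i ↦ lcoeff R i ∘ₗ modByMonicHom (X ^ n - 1)

lemma cyclicCoeff_apply (n : ℕ) (p : R[X]) (i : Fin n) :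
    cyclicCoeff n p i = (p %ₘ (X ^ n - 1)).coeff i :=
  rfl

variable {n : ℕ} [NeZero n]

lemma monic_X_pow_sub_one : (X ^ n - 1 : R[X]).Monic := by
  simpa using monic_X_pow_sub_C (1 : R) (NeZero.ne n)

lemma degree_X_pow_sub_one [Nontrivial R] : (X ^ n - 1 : R[X]).degree = n := by
  simpa using degree_X_pow_sub_C (NeZero.pos n) (1 : R)

lemma sum_cyclicCoeff_mul_X_pow (p : R[X]) :
    ∑ i, C (cyclicCoeff n p i) * X ^ (i : ℕ) = p %ₘ (X ^ n - 1) := by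
  nontriviality R
  simpa only [cyclicCoeff_apply, C_mul_X_pow_eq_monomial] using
    sum_modByMonic_coeff (p := p) monic_X_pow_sub_one degree_X_pow_sub_one.le

lemma X_pow_sub_one_dvd_sum_cyclicCoeff_sub (p : R[X]) :
    X ^ n - 1 ∣ ∑ i, C (cyclicCoeff n p i) * X ^ (i : ℕ) - p := by
  rw [sum_cyclicCoeff_mul_X_pow]
  exact dvd_modByMonic_sub _ _

lemma cyclicCoeff_eq_zero_iff {p : R[X]} : cyclicCoeff n p = 0 ↔ X ^ n - 1 ∣ p := by
  rw [← modByMonic_eq_zero_iff_dvd monic_X_pow_sub_one]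
  constructor <;> intro hp
  · simp [← sum_cyclicCoeff_mul_X_pow, hp]
  · ext i
    simp [cyclicCoeff_apply, hp]

lemma cyclicCoeff_eq_of_dvd_sub {p q : R[X]} (hpq : X ^ n - 1 ∣ p - q) :
    cyclicCoeff n p = cyclicCoeff n q := by
  rwa [← sub_eq_zero, ← map_sub, cyclicCoeff_eq_zero_iff]

lemma X_pow_sub_one_dvd_X_pow_sub_X_pow_mod (n i : ℕ) :
    (X ^ n - 1 : R[X]) ∣ X ^ i - X ^ (i % n) := by
  have factor : (X ^ i - X ^ (i % n) : R[X]) = X ^ (i % n) * ((X ^ n) ^ (i / n) - 1) := by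
    rw [mul_sub_one, ← pow_mul, ← pow_add, Nat.mod_add_div]
  rw [factor]
  exact (sub_one_dvd_pow_sub_one _ _).mul_left _

lemma cyclicCoeff_X_pow (i : ℕ) :
    cyclicCoeff n (X ^ i : R[X]) = Pi.single (Fin.ofNat n i) 1 := by
  nontriviality R
  have reduced : (X ^ (i % n) : R[X]) %ₘ (X ^ n - 1) = X ^ (i % n) := by
    rw [modByMonic_eq_self_iff monic_X_pow_sub_one, degree_X_pow_sub_one, degree_X_pow]
    exact_mod_cast Nat.mod_lt i (NeZero.pos n)
  rw [cyclicCoeff_eq_of_dvd_sub (X_pow_sub_one_dvd_X_pow_sub_X_pow_mod n i)]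
  ext j
  simp [cyclicCoeff_apply, reduced, coeff_X_pow, Pi.single_apply, Fin.ext_iff]

lemma cyclicCoeff_sum_C_mul_X_pow (u : Fin n → R) :
    cyclicCoeff n (∑ i, C (u i) * X ^ (i : ℕ)) = u := by
  simp [← smul_eq_C_mul, cyclicCoeff_X_pow, ← Pi.single_smul, Finset.univ_sum_single]

lemma forall_cyclicCoeff_dotProduct_eq_zero_iff {w : R[X]} :
    (∀ s : R[X], cyclicCoeff n s ⬝ᵥ cyclicCoeff n w = 0) ↔ X ^ n - 1 ∣ w := by
  rw [← cyclicCoeff_eq_zero_iff]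
  constructor
  · intro orth
    refine dotProduct_eq_zero _ fun u ↦ ?_
    rw [dotProduct_comm, ← cyclicCoeff_sum_C_mul_X_pow u]
    exact orth _
  · intro hw s
    rw [hw, dotProduct_zero]

lemma cyclicCoeff_X_pow_mul_dotProduct_X_pow_mul (k : ℕ) (p q : R[X]) :
    cyclicCoeff n (X ^ k * p) ⬝ᵥ cyclicCoeff n (X ^ k * q) =
      cyclicCoeff n p ⬝ᵥ cyclicCoeff n q := by
  induction p using Polynomial.induction_on' with
  | add p p' hp hp' => simp only [mul_add, map_add, add_dotProduct, hp, hp']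
  | monomial i a =>
    induction q using Polynomial.induction_on' with
    | add q q' hq hq' => simp only [mul_add, map_add, dotProduct_add, hq, hq']
    | monomial j c =>
      have shift : Fin.ofNat n (k + i) = Fin.ofNat n (k + j) ↔ Fin.ofNat n i = Fin.ofNat n j := by
        simp only [Fin.ext_iff, Fin.val_ofNat]
        exact Nat.ModEq.add_iff_left (Nat.ModEq.refl k)
      simp only [← smul_X_eq_monomial, mul_smul_comm, ← pow_add, map_smul, smul_dotProduct,
        dotProduct_smul, cyclicCoeff_X_pow, single_one_dotProduct, Pi.single_apply, shift]

lemma cyclicCoeff_mul_dotProduct_X_pow_mul (r p q : R[X]) :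
    cyclicCoeff n (r * p) ⬝ᵥ cyclicCoeff n (X ^ r.natDegree * q) =
      cyclicCoeff n p ⬝ᵥ cyclicCoeff n (r.reverse * q) := by
  suffices adjoint : ∀ N (t : R[X]), t.natDegree ≤ N →
      cyclicCoeff n (t * p) ⬝ᵥ cyclicCoeff n (X ^ N * q) =
        cyclicCoeff n p ⬝ᵥ cyclicCoeff n (reflect N t * q) from adjoint _ r le_rfl
  intro N
  refine Polynomial.induction_with_natDegree_le _ N (by simp) (fun i a _ hi ↦ ?_)
    fun t t' _ _ ht ht' ↦ by simp only [add_mul, map_add, add_dotProduct, dotProduct_add,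
      reflect_add, ht, ht']
  rw [reflect_C_mul_X_pow, revAt_le hi, ← Nat.add_sub_cancel' hi, pow_add,
    Nat.add_sub_cancel_left]
  simp only [mul_assoc, ← smul_eq_C_mul, smul_mul_assoc, map_smul, smul_dotProduct,
    dotProduct_smul, cyclicCoeff_X_pow_mul_dotProduct_X_pow_mul]

lemma isCoprime_X_pow_sub_one_X : IsCoprime (X ^ n - 1 : R[X]) X := by
  refine ⟨-1, X ^ (n - 1), ?_⟩
  rw [pow_sub_one_mul (NeZero.ne n)]
  ring

lemma forall_cyclicCoeff_mul_dotProduct_eq_zero_iff (d w : R[X]) :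
    (∀ s, cyclicCoeff n (d * s) ⬝ᵥ cyclicCoeff n w = 0) ↔ X ^ n - 1 ∣ d.reverse * w := by
  set m := d.natDegree
  have wrap : cyclicCoeff n w = cyclicCoeff n (X ^ m * (X ^ ((n - 1) * m) * w)) := by
    refine (cyclicCoeff_eq_of_dvd_sub ?_).symm
    have period : m + (n - 1) * m = n * m := by
      conv_rhs => rw [← Nat.sub_add_cancel (NeZero.pos n)]
      ring
    rw [← mul_assoc, ← pow_add, period, ← sub_one_mul, pow_mul]
    exact (sub_one_dvd_pow_sub_one _ _).mul_right w
  simp only [wrap, m, cyclicCoeff_mul_dotProduct_X_pow_mul,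
    forall_cyclicCoeff_dotProduct_eq_zero_iff]
  rw [mul_left_comm]
  exact ⟨isCoprime_X_pow_sub_one_X.pow_right.dvd_of_dvd_mul_left, fun hw ↦ hw.mul_left _⟩

end CyclicCoeff

lemma reverse_X_pow_sub_one {R : Type*} [Ring R] (n : ℕ) :
    (X ^ n - 1 : R[X]).reverse = 1 - X ^ n := by
  nontriviality R
  have power : (X ^ n : R[X]).reverse = 1 := by
    rw [← one_mul (X ^ n), reverse_mul_X_pow, ← C_1, reverse_C]
  rw [sub_eq_add_neg, ← C_1, ← C_neg, reverse_add_C, power, natDegree_X_pow]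
  simp [sub_eq_add_neg]

section CyclicDual

variable {R : Type*} [CommRing R] {n : ℕ}

lemma reverse_mul_reverse_of_mul_eq [NoZeroDivisors R] {d e : R[X]} (hde : d * e = X ^ n - 1) :
    d.reverse * e.reverse = 1 - X ^ n := by
  rw [← reverse_mul_of_domain, hde, reverse_X_pow_sub_one]

lemma forall_dvd_cyclicCoeff_dotProduct_eq_zero_iff [IsDomain R] [NeZero n] {d e : R[X]}
    (hde : d * e = X ^ n - 1) (w : R[X]) :
    (∀ s, d ∣ s → cyclicCoeff n s ⬝ᵥ cyclicCoeff n w = 0) ↔ e.reverse ∣ w := by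
  have hd : d.reverse ≠ 0 := by
    rw [Ne, reverse_eq_zero]
    rintro rfl
    exact monic_X_pow_sub_one.ne_zero (hde.symm.trans (zero_mul e))
  calc (∀ s, d ∣ s → cyclicCoeff n s ⬝ᵥ cyclicCoeff n w = 0)
    _ ↔ ∀ s, cyclicCoeff n (d * s) ⬝ᵥ cyclicCoeff n w = 0 := by
        simp only [dvd_def, forall_exists_index, forall_eq_apply_imp_iff]
    _ ↔ X ^ n - 1 ∣ d.reverse * w := forall_cyclicCoeff_mul_dotProduct_eq_zero_iff d w
    _ ↔ d.reverse * e.reverse ∣ d.reverse * w := by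
        rw [reverse_mul_reverse_of_mul_eq hde, ← neg_sub, neg_dvd]
    _ ↔ e.reverse ∣ w := mul_dvd_mul_iff_left hd

end CyclicDual

lemma subsingleton_units_polynomial (R : Type*) [CommRing R] [NoZeroDivisors R]
    [Subsingleton Rˣ] : Subsingleton R[X]ˣ := by
  refine subsingleton_of_forall_eq 1 fun u ↦ Units.ext ?_
  obtain ⟨r, hr, hru⟩ := Polynomial.isUnit_iff.1 u.isUnit
  rw [← hru, isUnit_iff_eq_one.1 hr]
  simp

lemma castHom_zmod_four_eq_zero_iff_two_mul_eq_zero (a : ZMod 4) :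
    ZMod.castHom (show 2 ∣ 4 by norm_num) (ZMod 2) a = 0 ↔ 2 * a = 0 := by
  revert a
  decide

lemma castHom_zmod_four_eq_zero_iff_two_dvd (a : ZMod 4) :
    ZMod.castHom (show 2 ∣ 4 by norm_num) (ZMod 2) a = 0 ↔ 2 ∣ a := by
  revert a
  decide

lemma red42_surjective : Function.Surjective red42 :=
  map_surjective _ (ZMod.castHom_surjective _)

lemma red42_eq_zero_iff_two_mul_eq_zero (p : (ZMod 4)[X]) : red42 p = 0 ↔ 2 * p = 0 := by
  simp only [Polynomial.ext_iff, red42, coe_mapRingHom, coeff_map, coeff_zero,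
    castHom_zmod_four_eq_zero_iff_two_mul_eq_zero, coeff_ofNat_mul]

lemma red42_eq_zero_iff_two_dvd (p : (ZMod 4)[X]) : red42 p = 0 ↔ 2 ∣ p := by
  rw [← C_ofNat, C_dvd_iff_dvd_coeff]
  simp only [Polynomial.ext_iff, red42, coe_mapRingHom, coeff_map, coeff_zero,
    castHom_zmod_four_eq_zero_iff_two_dvd]

lemma isCoprime_red42_of_mul_mul_eq {n : ℕ} (hn : Odd n) {f g h : (ZMod 4)[X]}
    (hfac : f * h * g = X ^ n - 1) : IsCoprime (red42 h) (red42 g) := by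
  have separable : (X ^ n - 1 : (ZMod 2)[X]).Separable := by
    rw [X_pow_sub_one_separable_iff, Ne, ZMod.natCast_eq_zero_iff_even, Nat.not_even_iff_odd]
    exact hn
  have reduced : red42 f * red42 h * red42 g = X ^ n - 1 := by
    rw [← map_mul, ← map_mul, hfac]
    simp [red42]
  rw [← reduced] at separable
  exact separable.isCoprime.of_mul_left_right

lemma red42_mul_dvd_of_dvd_mul {f g h μ : (ZMod 4)[X]} (hf : IsRegular f) (hh : h.Monic)
    (hhg : IsCoprime (red42 h) (red42 g)) (hμ : f * h * g ∣ μ * (f * h + 2 * f)) :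
    red42 (h * g) ∣ red42 μ := by
  obtain ⟨k, hk⟩ := hμ
  have cancel_f : μ * (h + 2) = h * g * k :=
    hf.left (by linear_combination hk)
  have red_two : red42 2 = 0 := (red42_eq_zero_iff_two_dvd 2).2 dvd_rfl
  have red_μ : red42 (μ - g * k) = 0 := by
    have red_cancel_f := congrArg red42 cancel_f
    have red_h_mul : red42 h * red42 (μ - g * k) = 0 := by
      simp only [map_mul, map_add, map_sub, red_two] at red_cancel_f ⊢
      linear_combination red_cancel_f
    exact (mul_eq_zero.1 red_h_mul).resolve_left (hh.map _).ne_zero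
  obtain ⟨t, ht⟩ := (red42_eq_zero_iff_two_dvd _).1 red_μ
  have red_μ' : red42 (μ + h * t) = 0 := by
    rw [red42_eq_zero_iff_two_mul_eq_zero]
    linear_combination cancel_f - h * ht
  rw [map_mul]
  refine hhg.mul_dvd ⟨-red42 t, ?_⟩ ⟨red42 k, ?_⟩
  · simp only [map_add, map_mul] at red_μ'
    linear_combination red_μ'
  · simp only [map_sub, map_mul] at red_μ
    linear_combination red_μ

lemma dvd_red42_mul_of_X_pow_sub_one_dvd {n : ℕ} (hn : Odd n) {f g h μ : (ZMod 4)[X]}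
    (hf : IsRegular f) (hh : h.Monic) (hfac : f * h * g = X ^ n - 1) {b ℓ : (ZMod 2)[X]}
    (hdvd : b ∣ red42 (h * g) * ℓ) (hμ : X ^ n - 1 ∣ μ * (f * h + 2 * f)) :
    b ∣ red42 μ * ℓ := by
  rw [← hfac] at hμ
  exact hdvd.trans (mul_dvd_mul_right
    (red42_mul_dvd_of_dvd_mul hf hh (isCoprime_red42_of_mul_mul_eq hn hfac) hμ) ℓ)

section AdditiveCode

variable {α β : ℕ}

lemma innerZ2Z4_zero_right_eq_zero_iff (u : (Fin α → ZMod 2) × (Fin β → ZMod 4))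
    (v : Fin α → ZMod 2) : innerZ2Z4 u (v, 0) = 0 ↔ u.1 ⬝ᵥ v = 0 := by
  simp only [innerZ2Z4, Pi.zero_apply, mul_zero, Finset.sum_const_zero, add_zero,
    ← castHom_zmod_four_eq_zero_iff_two_mul_eq_zero, map_sum, map_mul, map_natCast,
    ZMod.natCast_zmod_val]
  rfl

variable {b ℓ : (ZMod 2)[X]} {q : (ZMod 4)[X]}

lemma exists_memC_iff_gcd_dvd [NeZero β] (hb : b ∣ X ^ α - 1) (u : Fin α → ZMod 2) :
    (∃ u' : Fin β → ZMod 4, memC b ℓ q (u, u')) ↔ EuclideanDomain.gcd b ℓ ∣ polyOf2 u := by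
  constructor
  · rintro ⟨u', lam, μ, hu, -⟩
    have hd := (EuclideanDomain.gcd_dvd_left b ℓ).trans (hb.trans hu)
    refine (dvd_iff_dvd_of_dvd_sub hd).2 (dvd_add ?_ ?_)
    · exact (EuclideanDomain.gcd_dvd_left b ℓ).mul_left _
    · exact (EuclideanDomain.gcd_dvd_right b ℓ).mul_left _
  · rw [← Ideal.mem_span_singleton, EuclideanDomain.span_gcd, Ideal.mem_span_pair]
    rintro ⟨x, y, hxy⟩
    obtain ⟨lam, rfl⟩ := red42_surjective x
    obtain ⟨μ, rfl⟩ := red42_surjective y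
    exact ⟨cyclicCoeff β (μ * q), lam, μ, by simp [hxy],
      X_pow_sub_one_dvd_sum_cyclicCoeff_sub _⟩

lemma memC_zero_right_iff_dvd (hb : b ∣ X ^ α - 1)
    (hann : ∀ μ, X ^ β - 1 ∣ μ * q → b ∣ red42 μ * ℓ) (v : Fin α → ZMod 2) :
    memC b ℓ q (v, (0 : Fin β → ZMod 4)) ↔ b ∣ polyOf2 v := by
  have polyOf4_zero : polyOf4 (0 : Fin β → ZMod 4) = 0 := by simp [polyOf4]
  constructor
  · rintro ⟨lam, μ, hv, hμ⟩
    rw [polyOf4_zero, zero_sub, dvd_neg] at hμ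
    exact (dvd_iff_dvd_of_dvd_sub (hb.trans hv)).2 (dvd_add (dvd_mul_left _ _) (hann μ hμ))
  · rintro ⟨x, hx⟩
    obtain ⟨lam, rfl⟩ := red42_surjective x
    exact ⟨lam, 0, by simp [hx, mul_comm], by simp [polyOf4_zero]⟩

lemma forall_memC_innerZ2Z4_eq_zero_iff [NeZero α] [NeZero β] (hb : b ∣ X ^ α - 1)
    {e : (ZMod 2)[X]} (he : EuclideanDomain.gcd b ℓ * e = X ^ α - 1) (w : (ZMod 2)[X]) :
    (∀ u : (Fin α → ZMod 2) × (Fin β → ZMod 4),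
        memC b ℓ q u → innerZ2Z4 u (cyclicCoeff α w, 0) = 0) ↔ e.reverse ∣ w := by
  have cyclicCoeff_polyOf2 (u : Fin α → ZMod 2) : cyclicCoeff α (polyOf2 u) = u :=
    cyclicCoeff_sum_C_mul_X_pow u
  have gcd_dvd_polyOf2_cyclicCoeff (s : (ZMod 2)[X]) :
      EuclideanDomain.gcd b ℓ ∣ polyOf2 (cyclicCoeff α s) ↔ EuclideanDomain.gcd b ℓ ∣ s :=
    dvd_iff_dvd_of_dvd_sub
      ((Dvd.intro _ he).trans (X_pow_sub_one_dvd_sum_cyclicCoeff_sub s))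
  rw [← forall_dvd_cyclicCoeff_dotProduct_eq_zero_iff he]
  simp only [innerZ2Z4_zero_right_eq_zero_iff]
  constructor
  · intro orth s hs
    obtain ⟨u', hu'⟩ := (exists_memC_iff_gcd_dvd (β := β) (q := q) hb _).2
      ((gcd_dvd_polyOf2_cyclicCoeff s).2 hs)
    exact orth _ hu'
  · intro orth u hu
    simpa only [cyclicCoeff_polyOf2] using
      orth (polyOf2 u.1) ((exists_memC_iff_gcd_dvd hb u.1).1 ⟨u.2, hu⟩)

end AdditiveCode

/-- The hypothesis `hann` says that `(p | 0)` lies in `⟨(b̄|0), (ℓ̄|q̄)⟩` only for multiples `p` of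
`b̄`, which is what the standard form of the generators guarantees. -/
theorem dual_generator_bbar_general {α β : ℕ} (hα : 0 < α) (hβ : 0 < β)
    {b ℓ : (ZMod 2)[X]} {q : (ZMod 4)[X]} (hb : b ∣ X ^ α - 1)
    {bbar ℓbar : (ZMod 2)[X]} {qbar : (ZMod 4)[X]} (hbbar : bbar ∣ X ^ α - 1)
    (hann : ∀ μ, X ^ β - 1 ∣ μ * qbar → bbar ∣ red42 μ * ℓbar)
    (hdual : ∀ v : (Fin α → ZMod 2) × (Fin β → ZMod 4),
      (∀ u : (Fin α → ZMod 2) × (Fin β → ZMod 4), memC b ℓ q u → innerZ2Z4 u v = 0) ↔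
      memC bbar ℓbar qbar v) :
    bbar * (EuclideanDomain.gcd b ℓ).reverse = X ^ α - 1 := by
  have : NeZero α := ⟨hα.ne'⟩
  have : NeZero β := ⟨hβ.ne'⟩
  obtain ⟨e, he⟩ := (EuclideanDomain.gcd_dvd_left b ℓ).trans hb
  have multiples (w : (ZMod 2)[X]) : bbar ∣ w ↔ e.reverse ∣ w := by
    calc bbar ∣ w
      _ ↔ bbar ∣ polyOf2 (cyclicCoeff α w) := (dvd_iff_dvd_of_dvd_sub
          (hbbar.trans (X_pow_sub_one_dvd_sum_cyclicCoeff_sub w))).symm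
      _ ↔ memC bbar ℓbar qbar (cyclicCoeff α w, 0) :=
          (memC_zero_right_iff_dvd hbbar hann _).symm
      _ ↔ ∀ u, memC b ℓ q u → innerZ2Z4 u (cyclicCoeff α w, 0) = 0 := (hdual _).symm
      _ ↔ e.reverse ∣ w := forall_memC_innerZ2Z4_eq_zero_iff hb he.symm w
  have := subsingleton_units_polynomial (ZMod 2)
  rw [eq_of_forall_dvd multiples, mul_comm, reverse_mul_reverse_of_mul_eq he.symm, ← neg_sub,
    CharTwo.neg_eq]

/-- Let `C = ⟨(b|0), (ℓ|fh+2f)⟩` with dual `C⊥ = ⟨(b̄|0), (ℓ̄|f̄h̄+2f̄)⟩`, both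
in standard form. Then `b̄ = (x^α-1)/(gcd(b,ℓ))*` in `Z₂[x]`, where `p*`
denotes the reciprocal polynomial (stated multiplicatively:
`b̄ · (gcd(b,ℓ))* = x^α - 1`). -/
theorem dual_generator_bbar (α β : ℕ) (hα : 0 < α) (hβ : Odd β)
    (f g h : Polynomial (ZMod 4)) (hf : f.Monic) (hg : g.Monic) (hh : h.Monic)
    (hfac : f * h * g = X ^ β - 1)
    (b ℓ : Polynomial (ZMod 2)) (hb : b ∣ X ^ α - 1) (hℓ : ℓ.degree < b.degree)
    (hdvd : b ∣ red42 (h * g) * ℓ)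
    (fbar gbar hbar : Polynomial (ZMod 4))
    (hfbar : fbar.Monic) (hgbar : gbar.Monic) (hhbar : hbar.Monic)
    (hfacbar : fbar * hbar * gbar = X ^ β - 1)
    (bbar ℓbar : Polynomial (ZMod 2)) (hbbar : bbar ∣ X ^ α - 1)
    (hℓbar : ℓbar.degree < bbar.degree)
    (hdvdbar : bbar ∣ red42 (hbar * gbar) * ℓbar)
    (hdual : ∀ v : (Fin α → ZMod 2) × (Fin β → ZMod 4),
      (∀ u : (Fin α → ZMod 2) × (Fin β → ZMod 4),
        memC b ℓ (f * h + 2 * f) u → innerZ2Z4 u v = 0) ↔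
      memC bbar ℓbar (fbar * hbar + 2 * fbar) v) :
    bbar * (EuclideanDomain.gcd b ℓ).reverse = X ^ α - 1 := by
  exact dual_generator_bbar_general hα hβ.pos hb hbbar
    (fun _ ↦ dvd_red42_mul_of_X_pow_sub_one_dvd hβ hfbar.isRegular hhbar hfacbar hdvdbar) hdual
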